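/- (Airy-type determinant solutions) Let f be a smooth solution of the Airy equation f'' = 2z·f on an open interval I ⊆ ℝ, and for N ≥ 0 let ρ_N = det(f^{(i+j−2)})_{1≤i,j≤N} be the N×N Wronskian determinant of f (ρ_0 = 1), where f^{(m)} denotes the m-th derivative of f. If ρ_N and ρ_{N+1} are nowhere zero on I, then u = (log(ρ_{N+1}/ρ_N))' = ρ_{N+1}'/ρ_{N+1} − ρ_N'/ρ_N is a solution of P_II[N] on I, and W = 2(log ρ_N)'' = 2(ρ_N''·ρ_N − (ρ_N')²)/ρ_N² is a solution of P_XXXIV[N] on I. -/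

import Mathlib

/-- The `N×N` Wronskian determinant `ρ_N = det(f^{(i+j-2)})_{1≤i,j≤N}` of a function `f`
(with `ρ_0 = 1`, the determinant of the empty matrix). -/
noncomputable def airyWronskian (f : ℝ → ℝ) (N : ℕ) (z : ℝ) : ℝ :=
  Matrix.det (Matrix.of fun i j : Fin N => iteratedDeriv ((i : ℕ) + (j : ℕ)) f z)

/-!
Fix `N` and regard `f^{(j)}(z)` as the moments `L(t^j)` of a functional on polynomials, so that
`ρ_N` is a Hankel determinant. Let `P` be the monic orthogonal polynomial of degree `N`, let `Q` be
the polynomial of degree `< N` with `L(Q t^i) = 0` for `i < N - 1` and `L(Q t^(N-1)) = 1`, put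
`h = L(P²) = ρ_{N+1} / ρ_N`, and let `k = ρ_{N-1} / ρ_N` be the coefficient of `t^(N-1)` in `Q`.
Differentiation in `z` acts on the moments as multiplication by `t`, which gives the Toda equation
`(log ρ_N)'' = h k`. The Airy equation says that `L((t² - 2z) g) = 2 L(g')`; tested against `P` and
`Q` it gives `h'' = 2zh - 2h²k` and `h k' = k h' - 2N`. By elimination `2hk = 2 (log ρ_N)''` solves
P_XXXIV[N] and `h'/h = (log (ρ_{N+1} / ρ_N))'` solves P_II[N].
-/

section HankelMatrix

open Matrix

variable {R : Type*}

/-- The moments of the functional `g ↦ L(t g)` when `m k = L(t^k)`; for `m k = f^{(k)}(z)` this is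
the `z`-derivative of `m`. -/
def shiftSeq (m : ℕ → R) : ℕ → R := fun k => m (k + 1)

/-- The `N × N` Hankel matrix of a sequence, indexed from `0`. -/
def hankelMatrix (m : ℕ → R) (N : ℕ) : Matrix (Fin N) (Fin N) R :=
  of fun i j => m (i + j)

/-- The column that borders the `N × N` Hankel matrix inside the `(N + 1) × (N + 1)` one. -/
def hankelColumn (m : ℕ → R) (N : ℕ) : Fin N → R := fun i => m (N + i)

/-- The last standard basis vector, phrased so that it also makes sense (as the empty vector) for
`N = 0`. -/
def lastVec (R : Type*) [Zero R] [One R] (N : ℕ) : Fin N → R :=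
  fun i => if (i : ℕ) + 1 = N then 1 else 0

theorem hankelMatrix_isSymm (m : ℕ → R) (N : ℕ) : (hankelMatrix m N).IsSymm :=
  IsSymm.ext fun i j => congrArg m (add_comm (j : ℕ) i)

variable [CommRing R]

/-- The monic orthogonal polynomial of degree `N` for the moments `m` is
`P = t^N - ∑ i, monicCoeff m N i * t^i`. Meaningful only if the Hankel determinant is a unit. -/
noncomputable def monicCoeff (m : ℕ → R) (N : ℕ) : Fin N → R :=
  (hankelMatrix m N)⁻¹ *ᵥ hankelColumn m N

/-- The coefficients of the polynomial `Q` of degree `< N` that pairs to `1` with `t^(N-1)` and to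
`0` with every lower power of `t`. -/
noncomputable def dualCoeff (m : ℕ → R) (N : ℕ) : Fin N → R :=
  (hankelMatrix m N)⁻¹ *ᵥ lastVec R N

/-- The squared norm `h = L(P²) = L(t^N P)` of the monic orthogonal polynomial of degree `N`. -/
noncomputable def normSq (m : ℕ → R) (N : ℕ) : R :=
  m (2 * N) - hankelColumn m N ⬝ᵥ monicCoeff m N

/-- The coefficient `k` of `t^(N-1)` in `Q`, which is `ρ_{N-1} / ρ_N` in terms of Hankel
determinants. -/
noncomputable def dualLead (m : ℕ → R) (N : ℕ) : R := lastVec R N ⬝ᵥ dualCoeff m N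

/-- The derivative `h'` of `normSq` along the flow whose derivative on moments is `shiftSeq`. -/
noncomputable def normSqDeriv (m : ℕ → R) (N : ℕ) : R :=
  m (2 * N + 1) - hankelColumn (shiftSeq m) N ⬝ᵥ monicCoeff m N
    - normSq m N * (lastVec R N ⬝ᵥ monicCoeff m N)

/-- The second derivative `h''` of `normSq` along the flow whose derivative on moments is
`shiftSeq`. -/
noncomputable def normSqSecondDeriv (m : ℕ → R) (N : ℕ) : R :=
  m (2 * N + 2) - hankelColumn (shiftSeq (shiftSeq m)) N ⬝ᵥ monicCoeff m N
    - normSq m N * (hankelColumn (shiftSeq m) N ⬝ᵥ dualCoeff m N)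
    - normSqDeriv m N * (lastVec R N ⬝ᵥ monicCoeff m N)
    - normSq m N * (normSq m N * dualLead m N)

variable {m : ℕ → R} {N : ℕ}

theorem dotProduct_mulVec_of_isSymm {n : Type*} [Fintype n] {A : Matrix n n R} (hA : A.IsSymm)
    (v w : n → R) : v ⬝ᵥ A *ᵥ w = A *ᵥ v ⬝ᵥ w := by
  rw [dotProduct_mulVec, ← mulVec_transpose, hA.eq]

theorem hankelMatrix_mulVec_monicCoeff (h : IsUnit (hankelMatrix m N).det) :
    hankelMatrix m N *ᵥ monicCoeff m N = hankelColumn m N := by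
  rw [monicCoeff, mulVec_mulVec, mul_nonsing_inv _ h, one_mulVec]

theorem hankelMatrix_mulVec_dualCoeff (h : IsUnit (hankelMatrix m N).det) :
    hankelMatrix m N *ᵥ dualCoeff m N = lastVec R N := by
  rw [dualCoeff, mulVec_mulVec, mul_nonsing_inv _ h, one_mulVec]

theorem hankelColumn_dotProduct_dualCoeff (m : ℕ → R) (N : ℕ) :
    hankelColumn m N ⬝ᵥ dualCoeff m N = lastVec R N ⬝ᵥ monicCoeff m N := by
  rw [dualCoeff, dotProduct_mulVec_of_isSymm (hankelMatrix_isSymm m N).inv, dotProduct_comm,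
    monicCoeff]

theorem hankelMatrix_shiftSeq_mulVec_of_lt (m : ℕ → R) (v : Fin N → R) {i : Fin N}
    (hi : (i : ℕ) + 1 < N) :
    (hankelMatrix (shiftSeq m) N *ᵥ v) i = (hankelMatrix m N *ᵥ v) ⟨i + 1, hi⟩ := by
  simp only [mulVec, dotProduct, hankelMatrix, shiftSeq, of_apply, add_right_comm]

theorem hankelMatrix_shiftSeq_mulVec_of_eq (m : ℕ → R) (v : Fin N → R) {i : Fin N}
    (hi : (i : ℕ) + 1 = N) :
    (hankelMatrix (shiftSeq m) N *ᵥ v) i = hankelColumn m N ⬝ᵥ v := by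
  simp only [mulVec, dotProduct, hankelMatrix, hankelColumn, shiftSeq, of_apply,
    add_right_comm _ _ 1, hi]

theorem hankelMatrix_shiftSeq_mulVec_monicCoeff (h : IsUnit (hankelMatrix m N).det) :
    hankelMatrix (shiftSeq m) N *ᵥ monicCoeff m N + normSq m N • lastVec R N =
      hankelColumn (shiftSeq m) N := by
  ext i
  rcases (show (i : ℕ) + 1 ≤ N from i.isLt).lt_or_eq with hi | hi
  · simp only [Pi.add_apply, hankelMatrix_shiftSeq_mulVec_of_lt m _ hi,
      hankelMatrix_mulVec_monicCoeff h]
    simp [hankelColumn, shiftSeq, lastVec, hi.ne, add_assoc]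
  · simp only [Pi.add_apply, hankelMatrix_shiftSeq_mulVec_of_eq m _ hi, normSq]
    simp [hankelColumn, shiftSeq, lastVec, hi, add_assoc, two_mul]

theorem hankelColumn_shiftSeq_dotProduct_dualCoeff (h : IsUnit (hankelMatrix m N).det) :
    hankelColumn (shiftSeq m) N ⬝ᵥ dualCoeff m N =
      monicCoeff m N ⬝ᵥ hankelMatrix (shiftSeq m) N *ᵥ dualCoeff m N
        + normSq m N * dualLead m N := by
  rw [← hankelMatrix_shiftSeq_mulVec_monicCoeff h, add_dotProduct, smul_dotProduct, smul_eq_mul,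
    dotProduct_mulVec_of_isSymm (hankelMatrix_isSymm (shiftSeq m) N), dualLead]

theorem hankelMatrix_shiftSeq_shiftSeq_mulVec_monicCoeff (h : IsUnit (hankelMatrix m N).det) :
    hankelMatrix (shiftSeq (shiftSeq m)) N *ᵥ monicCoeff m N
        + normSq m N • hankelMatrix (shiftSeq m) N *ᵥ dualCoeff m N
        + normSqDeriv m N • lastVec R N =
      hankelColumn (shiftSeq (shiftSeq m)) N := by
  ext i
  rcases (show (i : ℕ) + 1 ≤ N from i.isLt).lt_or_eq with hi | hi
  · have hsucc := congrFun (hankelMatrix_shiftSeq_mulVec_monicCoeff h) ⟨i + 1, hi⟩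
    simp only [Pi.add_apply, Pi.smul_apply, hankelMatrix_shiftSeq_mulVec_of_lt _ _ hi,
      hankelMatrix_mulVec_dualCoeff h] at hsucc ⊢
    simpa [hankelColumn, shiftSeq, lastVec, hi.ne, add_assoc] using hsucc
  · simp only [Pi.add_apply, Pi.smul_apply, hankelMatrix_shiftSeq_mulVec_of_eq _ _ hi,
      hankelColumn_dotProduct_dualCoeff, normSqDeriv]
    simp only [hankelColumn, shiftSeq, lastVec, hi, if_true, smul_eq_mul]
    rw [show N + (i : ℕ) + 1 + 1 = 2 * N + 1 by lia]
    ring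

theorem det_hankelMatrix_succ (h : IsUnit (hankelMatrix m N).det) :
    (hankelMatrix m (N + 1)).det = (hankelMatrix m N).det * normSq m N := by
  have := invertibleOfIsUnitDet _ h
  have hblocks : (hankelMatrix m (N + 1)).submatrix finSumFinEquiv finSumFinEquiv =
      fromBlocks (hankelMatrix m N) (replicateCol (Fin 1) (hankelColumn m N))
        (replicateRow (Fin 1) (hankelColumn m N)) (of fun _ _ => m (2 * N)) := by
    ext (i | i) (j | j) <;>
      simp [hankelMatrix, hankelColumn, add_comm, two_mul]
  rw [← det_submatrix_equiv_self finSumFinEquiv, hblocks, det_fromBlocks₁₁, det_fin_one,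
    invOf_eq_nonsing_inv, Matrix.mul_assoc, ← replicateCol_mulVec]
  rfl

end HankelMatrix

section AiryMoments

open Matrix

variable {R : Type*} [CommRing R]

/-- The recurrence satisfied by the derivatives `m k = f^{(k)}(z)` of a solution of `f'' = 2zf`; the
term with `k - 1` carries the factor `k`, so truncated subtraction at `k = 0` is harmless. -/
def IsAiryMomentSeq (z : R) (m : ℕ → R) : Prop :=
  ∀ k : ℕ, m (k + 2) = 2 * z * m k + 2 * k * m (k - 1)

/-- The matrix of `d/dt` on coefficient vectors of polynomials in `t` of degree `< N`. -/
def diffMatrix (R : Type*) [CommRing R] (N : ℕ) : Matrix (Fin N) (Fin N) R :=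
  of fun i j => if (i : ℕ) + 1 = j then (j : R) else 0

theorem vecMul_diffMatrix {N : ℕ} (g : ℕ → R) :
    (fun i : Fin N => g i) ᵥ* diffMatrix R N =
      fun j : Fin N => ((j : ℕ) : R) * g ((j : ℕ) - 1) := by
  ext j
  obtain ⟨_ | k, hk⟩ := j
  · simp [vecMul, dotProduct, diffMatrix]
  · have : ∀ i : Fin N, (i : ℕ) = k ↔ i = ⟨k, by lia⟩ := fun i => by simp [Fin.ext_iff]
    simp [vecMul, dotProduct, diffMatrix, this, mul_comm]

theorem lastVec_vecMul_diffMatrix (N : ℕ) : lastVec R N ᵥ* diffMatrix R N = 0 := by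
  refine (vecMul_diffMatrix fun i => if i + 1 = N then (1 : R) else 0).trans ?_
  ext ⟨_ | k, hk⟩ <;> simp [hk.ne]

theorem natCast_mul_dotProduct_lastVec {N : ℕ} (g : ℕ → R) :
    (N : R) * ((fun i : Fin N => g i) ⬝ᵥ lastVec R N) = N * g (N - 1) := by
  obtain _ | n := N
  · simp
  · have : ∀ i : Fin (n + 1), (i : ℕ) = n ↔ i = Fin.last n := fun i => by simp [Fin.ext_iff]
    simp [dotProduct, lastVec, this]

variable {m : ℕ → R} {N : ℕ} {z : R}

theorem IsAiryMomentSeq.hankelMatrix_shiftSeq_shiftSeq (hm : IsAiryMomentSeq z m) :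
    hankelMatrix (shiftSeq (shiftSeq m)) N = (2 * z) • hankelMatrix m N
      + (2 : R) • (hankelMatrix m N * diffMatrix R N
        + (diffMatrix R N)ᵀ * hankelMatrix m N) := by
  have hmul (i j : Fin N) :
      (hankelMatrix m N * diffMatrix R N) i j = j * m (i + j - 1) := by
    refine (congrFun (vecMul_diffMatrix (N := N) fun k => m (i + k)) j).trans ?_
    obtain ⟨_ | k, hk⟩ := j <;> simp
  have htranspose : (diffMatrix R N)ᵀ * hankelMatrix m N =
      (hankelMatrix m N * diffMatrix R N)ᵀ := by
    rw [transpose_mul, (hankelMatrix_isSymm m N).eq]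
  ext i j
  simp only [htranspose, Matrix.add_apply, Matrix.smul_apply, transpose_apply, hmul, smul_eq_mul,
    add_comm (j : ℕ) i]
  refine (hm (i + j)).trans ?_
  push_cast [hankelMatrix, of_apply]
  ring

theorem IsAiryMomentSeq.hankelColumn_shiftSeq_shiftSeq (hm : IsAiryMomentSeq z m) :
    hankelColumn (shiftSeq (shiftSeq m)) N = (2 * z) • hankelColumn m N
      + (2 * N : R) • hankelMatrix m N *ᵥ lastVec R N
      + (2 : R) • hankelColumn m N ᵥ* diffMatrix R N := by
  have hcol : hankelColumn m N ᵥ* diffMatrix R N =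
      fun i : Fin N => ((i : ℕ) : R) * m (N + (i : ℕ) - 1) := by
    refine (vecMul_diffMatrix fun k => m (N + k)).trans ?_
    ext ⟨_ | k, hk⟩ <;> simp
  ext i
  have hlast : (N : R) * (hankelMatrix m N *ᵥ lastVec R N) i = N * m (N + i - 1) := by
    refine (natCast_mul_dotProduct_lastVec fun k => m (i + k)).trans ?_
    rw [show (i : ℕ) + (N - 1) = N + i - 1 by have := i.isLt; lia]
  simp only [Pi.add_apply, Pi.smul_apply, smul_eq_mul, hcol]
  refine (hm (N + i)).trans ?_
  push_cast [hankelColumn]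
  linear_combination -2 * hlast

theorem IsAiryMomentSeq.mulVec_diffMatrix_monicCoeff (hm : IsAiryMomentSeq z m)
    (h : IsUnit (hankelMatrix m N).det) :
    (2 : R) • hankelMatrix m N *ᵥ (diffMatrix R N *ᵥ monicCoeff m N)
        + normSq m N • hankelMatrix (shiftSeq m) N *ᵥ dualCoeff m N
        + normSqDeriv m N • lastVec R N =
      (2 * N : R) • hankelMatrix m N *ᵥ lastVec R N := by
  have hshift := hankelMatrix_shiftSeq_shiftSeq_mulVec_monicCoeff h
  rw [hm.hankelMatrix_shiftSeq_shiftSeq, hm.hankelColumn_shiftSeq_shiftSeq, add_mulVec,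
    smul_mulVec, smul_mulVec, add_mulVec, ← mulVec_mulVec, ← mulVec_mulVec,
    hankelMatrix_mulVec_monicCoeff h, mulVec_transpose, smul_add] at hshift
  linear_combination (exp := 1) hshift

theorem IsAiryMomentSeq.normSq_mul_dotProduct (hm : IsAiryMomentSeq z m)
    (h : IsUnit (hankelMatrix m N).det) :
    normSq m N * (dualCoeff m N ⬝ᵥ hankelMatrix (shiftSeq m) N *ᵥ dualCoeff m N)
      = 2 * N - normSqDeriv m N * dualLead m N := by
  have hlast : (N : R) * (lastVec R N ⬝ᵥ lastVec R N) = N := by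
    refine (natCast_mul_dotProduct_lastVec fun i => if i + 1 = N then 1 else 0).trans ?_
    obtain _ | n := N <;> simp
  have hpair := congrArg (dualCoeff m N ⬝ᵥ ·) (hm.mulVec_diffMatrix_monicCoeff h)
  simp only [dotProduct_add, dotProduct_smul, smul_eq_mul,
    dotProduct_mulVec_of_isSymm (hankelMatrix_isSymm m N), hankelMatrix_mulVec_dualCoeff h,
    dotProduct_mulVec (lastVec R N), lastVec_vecMul_diffMatrix, zero_dotProduct] at hpair
  rw [dotProduct_comm _ (lastVec R N), ← dualLead] at hpair
  linear_combination hpair + 2 * hlast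

theorem IsAiryMomentSeq.normSqSecondDeriv_eq (hm : IsAiryMomentSeq z m)
    (h : IsUnit (hankelMatrix m N).det) :
    normSqSecondDeriv m N = 2 * z * normSq m N - 2 * normSq m N ^ 2 * dualLead m N := by
  have hlast : (N : R) * (hankelColumn m N ⬝ᵥ lastVec R N) = N * m (2 * N - 1) := by
    refine (natCast_mul_dotProduct_lastVec fun i => m (N + i)).trans ?_
    obtain _ | n := N
    · simp
    · rw [show n + 1 + (n + 1 - 1) = 2 * (n + 1) - 1 by lia]
  have hpair := congrArg (monicCoeff m N ⬝ᵥ ·) (hm.mulVec_diffMatrix_monicCoeff h)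
  simp only [dotProduct_add, dotProduct_smul, smul_eq_mul,
    dotProduct_mulVec_of_isSymm (hankelMatrix_isSymm m N),
    hankelMatrix_mulVec_monicCoeff h] at hpair
  rw [dotProduct_comm (monicCoeff m N) (lastVec R N)] at hpair
  have hcol := congrArg (· ⬝ᵥ monicCoeff m N) (hm.hankelColumn_shiftSeq_shiftSeq (N := N))
  simp only [add_dotProduct, smul_dotProduct, smul_eq_mul,
    ← dotProduct_mulVec_of_isSymm (hankelMatrix_isSymm m N), hankelMatrix_mulVec_monicCoeff h,
    ← dotProduct_mulVec, dotProduct_comm (lastVec R N)] at hcol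
  have htop := hm (2 * N)
  push_cast at htop
  rw [normSqSecondDeriv, hcol, hankelColumn_shiftSeq_dotProduct_dualCoeff h, htop]
  have hnorm : normSq m N = m (2 * N) - hankelColumn m N ⬝ᵥ monicCoeff m N := rfl
  linear_combination -4 * hlast - hpair - 2 * z * hnorm

end AiryMoments

section MatrixCalculus

open Matrix Topology

variable {𝕜 n : Type*} [NontriviallyNormedField 𝕜] [Fintype n] {z : 𝕜}
  {M : 𝕜 → Matrix n n 𝕜} {M' : Matrix n n 𝕜}

theorem hasDerivAt_dotProduct {v w : 𝕜 → n → 𝕜} {v' w' : n → 𝕜} (hv : HasDerivAt v v' z)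
    (hw : HasDerivAt w w' z) :
    HasDerivAt (fun x => v x ⬝ᵥ w x) (v' ⬝ᵥ w z + v z ⬝ᵥ w') z := by
  rw [hasDerivAt_pi] at hv hw
  simpa only [dotProduct, Finset.sum_add_distrib] using
    HasDerivAt.fun_sum fun i _ => (hv i).fun_mul (hw i)

theorem hasDerivAt_mulVec {v : 𝕜 → n → 𝕜} {v' : n → 𝕜}
    (hM : ∀ i j, HasDerivAt (fun x => M x i j) (M' i j) z) (hv : HasDerivAt v v' z) :
    HasDerivAt (fun x => M x *ᵥ v x) (M' *ᵥ v z + M z *ᵥ v') z :=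
  hasDerivAt_pi.2 fun i => hasDerivAt_dotProduct (hasDerivAt_pi.2 (hM i)) hv

variable [DecidableEq n]

theorem hasDerivAt_det (hM : ∀ i j, HasDerivAt (fun x => M x i j) (M' i j) z) :
    HasDerivAt (fun x => (M x).det) (∑ j, ((M z).updateCol j fun i => M' i j).det) z := by
  have hprod (σ : Equiv.Perm n) :
      HasDerivAt (fun x => ∏ j, M x (σ j) j)
        (∑ j, ∏ i, (M z).updateCol j (fun i => M' i j) (σ i) i) z := by
    refine (HasDerivAt.fun_finsetProd fun j _ => hM (σ j) j).congr_deriv ?_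
    refine Finset.sum_congr rfl fun j _ => ?_
    rw [← Finset.prod_erase_mul _ _ (Finset.mem_univ j), smul_eq_mul, updateCol_self]
    congr 1
    exact Finset.prod_congr rfl fun i hi => (updateCol_ne (Finset.ne_of_mem_erase hi)).symm
  simp only [det_apply', Finset.sum_comm (s := (Finset.univ : Finset n)), ← Finset.mul_sum]
  exact HasDerivAt.fun_sum fun σ _ => (hprod σ).const_mul _

theorem differentiableAt_inv_mulVec {b : 𝕜 → n → 𝕜} {b' : n → 𝕜}
    (hM : ∀ i j, HasDerivAt (fun x => M x i j) (M' i j) z) (hb : HasDerivAt b b' z)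
    (hdet : (M z).det ≠ 0) : DifferentiableAt 𝕜 (fun x => (M x)⁻¹ *ᵥ b x) z := by
  refine differentiableAt_pi.2 fun j => ?_
  have hcol (i k : n) : HasDerivAt (fun x => (M x).updateCol j (b x) i k)
      (M'.updateCol j b' i k) z := by
    rcases eq_or_ne k j with rfl | hk
    · simpa only [updateCol_self] using hasDerivAt_pi.1 hb i
    · simpa only [updateCol_ne hk] using hM i k
  refine ((hasDerivAt_det hcol).differentiableAt.fun_div (hasDerivAt_det hM).differentiableAt
    hdet).congr_of_eventuallyEq ?_
  filter_upwards [(hasDerivAt_det hM).continuousAt.eventually_ne hdet] with x hx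
  rw [← cramer_apply, ← det_smul_inv_mulVec_eq_cramer _ _ hx.isUnit, Pi.smul_apply, smul_eq_mul,
    mul_div_cancel_left₀ _ hx]

theorem hasDerivAt_inv_mulVec {b : 𝕜 → n → 𝕜} {b' : n → 𝕜}
    (hM : ∀ i j, HasDerivAt (fun x => M x i j) (M' i j) z) (hb : HasDerivAt b b' z)
    (hdet : (M z).det ≠ 0) :
    HasDerivAt (fun x => (M x)⁻¹ *ᵥ b x) ((M z)⁻¹ *ᵥ (b' - M' *ᵥ ((M z)⁻¹ *ᵥ b z))) z := by
  have hdiff := (differentiableAt_inv_mulVec hM hb hdet).hasDerivAt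
  have hsol : (fun x => M x *ᵥ ((M x)⁻¹ *ᵥ b x)) =ᶠ[𝓝 z] b := by
    filter_upwards [(hasDerivAt_det hM).continuousAt.eventually_ne hdet] with x hx
    rw [mulVec_mulVec, mul_nonsing_inv _ hx.isUnit, one_mulVec]
  rw [← (hasDerivAt_mulVec hM hdiff).unique (hb.congr_of_eventuallyEq hsol),
    add_sub_cancel_left, mulVec_mulVec, nonsing_inv_mul _ hdet.isUnit, one_mulVec]
  exact hdiff

end MatrixCalculus

section MomentDerivatives

open Matrix

variable {𝕜 : Type*} [NontriviallyNormedField 𝕜] {μ : ℕ → 𝕜 → 𝕜} {z : 𝕜} {N : ℕ}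

theorem hasDerivAt_hankelColumn (hμ : ∀ k, HasDerivAt (μ k) (μ (k + 1) z) z) :
    HasDerivAt (fun x => hankelColumn (μ · x) N) (hankelColumn (shiftSeq (μ · z)) N) z :=
  hasDerivAt_pi.2 fun i => hμ (N + i)

theorem hasDerivAt_hankelMatrix (hμ : ∀ k, HasDerivAt (μ k) (μ (k + 1) z) z) (i j : Fin N) :
    HasDerivAt (fun x => hankelMatrix (μ · x) N i j) (hankelMatrix (shiftSeq (μ · z)) N i j) z :=
  hμ (i + j)

theorem hasDerivAt_monicCoeff (hμ : ∀ k, HasDerivAt (μ k) (μ (k + 1) z) z)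
    (hdet : (hankelMatrix (μ · z) N).det ≠ 0) :
    HasDerivAt (fun x => monicCoeff (μ · x) N) (normSq (μ · z) N • dualCoeff (μ · z) N) z := by
  refine (hasDerivAt_inv_mulVec (hasDerivAt_hankelMatrix hμ) (hasDerivAt_hankelColumn hμ)
    hdet).congr_deriv ?_
  rw [← hankelMatrix_shiftSeq_mulVec_monicCoeff hdet.isUnit, monicCoeff, add_sub_cancel_left,
    mulVec_smul, dualCoeff]

theorem hasDerivAt_dualLead (hμ : ∀ k, HasDerivAt (μ k) (μ (k + 1) z) z)
    (hdet : (hankelMatrix (μ · z) N).det ≠ 0) :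
    HasDerivAt (fun x => dualLead (μ · x) N)
      (-(dualCoeff (μ · z) N ⬝ᵥ hankelMatrix (shiftSeq (μ · z)) N *ᵥ dualCoeff (μ · z) N)) z := by
  have hdual := hasDerivAt_inv_mulVec (hasDerivAt_hankelMatrix hμ)
    (hasDerivAt_const z (lastVec 𝕜 N)) hdet
  refine (hasDerivAt_dotProduct (hasDerivAt_const z (lastVec 𝕜 N)) hdual).congr_deriv ?_
  rw [zero_dotProduct, zero_add, zero_sub, mulVec_neg, dotProduct_neg,
    dotProduct_mulVec_of_isSymm (hankelMatrix_isSymm (μ · z) N).inv, dualCoeff]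

theorem hasDerivAt_lastVec_dotProduct_monicCoeff (hμ : ∀ k, HasDerivAt (μ k) (μ (k + 1) z) z)
    (hdet : (hankelMatrix (μ · z) N).det ≠ 0) :
    HasDerivAt (fun x => lastVec 𝕜 N ⬝ᵥ monicCoeff (μ · x) N)
      (normSq (μ · z) N * dualLead (μ · z) N) z := by
  refine (hasDerivAt_dotProduct (hasDerivAt_const z (lastVec 𝕜 N))
    (hasDerivAt_monicCoeff hμ hdet)).congr_deriv ?_
  rw [zero_dotProduct, zero_add, dotProduct_smul, smul_eq_mul, dualLead]

theorem hasDerivAt_normSq (hμ : ∀ k, HasDerivAt (μ k) (μ (k + 1) z) z)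
    (hdet : (hankelMatrix (μ · z) N).det ≠ 0) :
    HasDerivAt (fun x => normSq (μ · x) N) (normSqDeriv (μ · z) N) z := by
  refine ((hμ (2 * N)).fun_sub (hasDerivAt_dotProduct (hasDerivAt_hankelColumn hμ)
    (hasDerivAt_monicCoeff hμ hdet))).congr_deriv ?_
  rw [dotProduct_smul, hankelColumn_dotProduct_dualCoeff, normSqDeriv, smul_eq_mul, sub_sub]

theorem hasDerivAt_normSqDeriv (hμ : ∀ k, HasDerivAt (μ k) (μ (k + 1) z) z)
    (hdet : (hankelMatrix (μ · z) N).det ≠ 0) :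
    HasDerivAt (fun x => normSqDeriv (μ · x) N) (normSqSecondDeriv (μ · z) N) z := by
  have hshift : HasDerivAt (fun x => hankelColumn (shiftSeq (μ · x)) N)
      (hankelColumn (shiftSeq (shiftSeq (μ · z))) N) z :=
    hasDerivAt_hankelColumn (μ := fun k => μ (k + 1)) fun k => hμ (k + 1)
  refine (((hμ (2 * N + 1)).fun_sub (hasDerivAt_dotProduct hshift
    (hasDerivAt_monicCoeff hμ hdet))).fun_sub ((hasDerivAt_normSq hμ hdet).fun_mul
      (hasDerivAt_lastVec_dotProduct_monicCoeff hμ hdet))).congr_deriv ?_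
  rw [dotProduct_smul, smul_eq_mul, normSqSecondDeriv]
  ring

theorem hasDerivAt_det_hankelMatrix (hμ : ∀ k, HasDerivAt (μ k) (μ (k + 1) z) z)
    (hdet : (hankelMatrix (μ · z) N).det ≠ 0) :
    HasDerivAt (fun x => (hankelMatrix (μ · x) N).det)
      ((hankelMatrix (μ · z) N).det * (lastVec 𝕜 N ⬝ᵥ monicCoeff (μ · z) N)) z := by
  refine (hasDerivAt_det (hasDerivAt_hankelMatrix hμ)).congr_deriv ?_
  rw [dotProduct, Finset.mul_sum]
  refine Finset.sum_congr rfl fun j _ => ?_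
  rcases (show (j : ℕ) + 1 ≤ N from j.isLt).lt_or_eq with hj | hj
  · have hcol : (fun i => hankelMatrix (shiftSeq (μ · z)) N i j) =
        fun i => hankelMatrix (μ · z) N i ⟨j + 1, hj⟩ := rfl
    rw [hcol, det_updateCol_eq_zero (Fin.ne_of_val_ne (Nat.succ_ne_self j))]
    simp [lastVec, hj.ne]
  · have hcol : (fun i => hankelMatrix (shiftSeq (μ · z)) N i j) = hankelColumn (μ · z) N := by
      ext i
      simp only [hankelMatrix, hankelColumn, shiftSeq, of_apply, add_assoc, hj, add_comm N]
    rw [hcol, ← cramer_apply, ← det_smul_inv_mulVec_eq_cramer _ _ hdet.isUnit]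
    simp [lastVec, hj, monicCoeff]

end MomentDerivatives

section Painleve

open Topology

variable {𝕜 : Type*} [NontriviallyNormedField 𝕜] {I : Set 𝕜} {z : 𝕜}

theorem deriv_deriv_eq_of_hasDerivAt {f f' : 𝕜 → 𝕜} {f'' : 𝕜}
    (hf : ∀ᶠ x in 𝓝 z, HasDerivAt f (f' x) x) (hf' : HasDerivAt f' f'' z) :
    deriv (deriv f) z = f'' :=
  (hf'.congr_of_eventuallyEq (hf.mono fun _ hx => hx.deriv)).deriv

/-- The system satisfied on `I` by `h = ρ_{N+1} / ρ_N`, `p = h'`, `k = ρ_{N-1} / ρ_N` and `q = k'`,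
with `N` replaced by a parameter `α`. The equation for `k'` is multiplied by `h`, so that `h` may
vanish. -/
structure IsTodaAirySystem (α : 𝕜) (I : Set 𝕜) (h p k q : 𝕜 → 𝕜) : Prop where
  hasDerivAt_h : ∀ z ∈ I, HasDerivAt h (p z) z
  hasDerivAt_p : ∀ z ∈ I, HasDerivAt p (2 * z * h z - 2 * h z ^ 2 * k z) z
  hasDerivAt_k : ∀ z ∈ I, HasDerivAt k (q z) z
  mul_eq : ∀ z ∈ I, h z * q z = k z * p z - 2 * α

namespace IsTodaAirySystem

variable {α : 𝕜} {h p k q : 𝕜 → 𝕜}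

theorem hasDerivAt_mul (H : IsTodaAirySystem α I h p k q) (hz : z ∈ I) :
    HasDerivAt (fun x => h x * k x) (2 * p z * k z - 2 * α) z := by
  refine ((H.hasDerivAt_h z hz).fun_mul (H.hasDerivAt_k z hz)).congr_deriv ?_
  linear_combination H.mul_eq z hz

theorem painleveXXXIV (H : IsTodaAirySystem α I h p k q) (hI : IsOpen I) {W : 𝕜 → 𝕜}
    (hW : ∀ x ∈ I, W x = 2 * (h x * k x)) (hz : z ∈ I) :
    2 * W z * deriv (deriv W) z - deriv W z ^ 2 + 4 * W z ^ 3 - 8 * z * W z ^ 2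
      + 16 * α ^ 2 = 0 := by
  have hW' : ∀ x ∈ I, HasDerivAt W (2 * (2 * p x * k x - 2 * α)) x := fun x hx =>
    ((H.hasDerivAt_mul hx).const_mul 2).congr_of_eventuallyEq
      (Set.EqOn.eventuallyEq_of_mem hW (hI.mem_nhds hx))
  have hW'' := deriv_deriv_eq_of_hasDerivAt (Filter.eventually_of_mem (hI.mem_nhds hz) hW') <|
    ((((H.hasDerivAt_p z hz).const_mul 2).fun_mul (H.hasDerivAt_k z hz)).sub_const
      (2 * α)).const_mul 2
  rw [hW'', (hW' z hz).deriv, hW z hz]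
  linear_combination 16 * k z * p z * H.mul_eq z hz

theorem painleveII (H : IsTodaAirySystem α I h p k q) (hI : IsOpen I) {u : 𝕜 → 𝕜}
    (hu : ∀ x ∈ I, h x ≠ 0 → u x = p x / h x) (hz : z ∈ I) (hh : h z ≠ 0) :
    deriv (deriv u) z = 2 * u z ^ 3 - 4 * z * u z + (4 * α + 2) := by
  have hnear {x : 𝕜} (hx : x ∈ I) (hhx : h x ≠ 0) : ∀ᶠ y in 𝓝 x, y ∈ I ∧ h y ≠ 0 :=
    (hI.eventually_mem hx).and ((H.hasDerivAt_h x hx).continuousAt.eventually_ne hhx)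
  have hu' {x : 𝕜} (hx : x ∈ I) (hhx : h x ≠ 0) :
      HasDerivAt u (2 * x - 2 * (h x * k x) - u x ^ 2) x := by
    refine (((H.hasDerivAt_p x hx).fun_div (H.hasDerivAt_h x hx) hhx).congr_deriv
      ?_).congr_of_eventuallyEq ((hnear hx hhx).mono fun y hy => hu y hy.1 hy.2)
    rw [hu x hx hhx]
    field_simp
  rw [deriv_deriv_eq_of_hasDerivAt ((hnear hz hh).mono fun x hx => hu' hx.1 hx.2) <|
    (((hasDerivAt_id' z).const_mul 2).fun_sub ((H.hasDerivAt_mul hz).const_mul 2)).fun_sub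
      ((hu' hz hh).fun_pow 2)]
  have hp : p z = u z * h z := by rw [hu z hz hh, div_mul_cancel₀ _ hh]
  rw [hp]
  ring

end IsTodaAirySystem

end Painleve

section AirySolutions

variable {𝕜 : Type*} [NontriviallyNormedField 𝕜] {I : Set 𝕜} {f : 𝕜 → 𝕜}

theorem hasDerivAt_iteratedDeriv_and_recurrence_of_airy (hI : IsOpen I)
    (hf : DifferentiableOn 𝕜 f I) (hf' : DifferentiableOn 𝕜 (deriv f) I)
    (hairy : ∀ z ∈ I, deriv (deriv f) z = 2 * z * f z) (k : ℕ) : ∀ z ∈ I,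
      HasDerivAt (iteratedDeriv k f) (iteratedDeriv (k + 1) f z) z ∧
      HasDerivAt (iteratedDeriv (k + 1) f) (iteratedDeriv (k + 2) f z) z ∧
      HasDerivAt (fun x => k * iteratedDeriv (k - 1) f x) (k * iteratedDeriv k f z) z ∧
      iteratedDeriv (k + 2) f z =
        2 * z * iteratedDeriv k f z + 2 * k * iteratedDeriv (k - 1) f z := by
  induction k with
  | zero =>
    intro z hz
    simp only [zero_add, iteratedDeriv_zero, iteratedDeriv_succ, Nat.cast_zero, zero_mul,
      mul_zero, add_zero]
    exact ⟨(hf.differentiableAt (hI.mem_nhds hz)).hasDerivAt,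
      (hf'.differentiableAt (hI.mem_nhds hz)).hasDerivAt, hasDerivAt_const z 0, hairy z hz⟩
  | succ k ih =>
    intro z hz
    obtain ⟨hk, hk1, hpred, -⟩ := ih z hz
    have hrhs := (((hasDerivAt_id' z).const_mul 2).fun_mul hk).fun_add (hpred.const_mul 2)
    have hk2 := hrhs.congr_of_eventuallyEq (f₁ := iteratedDeriv (k + 2) f) <| by
      filter_upwards [hI.mem_nhds hz] with x hx
      rw [(ih x hx).2.2.2, mul_assoc 2 (k : 𝕜)]
    have hrec : iteratedDeriv (k + 3) f z =
        2 * z * iteratedDeriv (k + 1) f z + 2 * (k + 1 : ℕ) * iteratedDeriv k f z := by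
      rw [iteratedDeriv_succ, hk2.deriv]
      push_cast
      ring
    refine ⟨hk1, ?_, hk.const_mul _, hrec⟩
    rw [iteratedDeriv_succ (n := k + 2)]
    exact hk2.differentiableAt.hasDerivAt

theorem hasDerivAt_iteratedDeriv_of_airy (hI : IsOpen I) (hf : DifferentiableOn 𝕜 f I)
    (hf' : DifferentiableOn 𝕜 (deriv f) I) (hairy : ∀ z ∈ I, deriv (deriv f) z = 2 * z * f z)
    (k : ℕ) {z : 𝕜} (hz : z ∈ I) :
    HasDerivAt (iteratedDeriv k f) (iteratedDeriv (k + 1) f z) z :=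
  (hasDerivAt_iteratedDeriv_and_recurrence_of_airy hI hf hf' hairy k z hz).1

theorem isAiryMomentSeq_iteratedDeriv (hI : IsOpen I) (hf : DifferentiableOn 𝕜 f I)
    (hf' : DifferentiableOn 𝕜 (deriv f) I) (hairy : ∀ z ∈ I, deriv (deriv f) z = 2 * z * f z)
    {z : 𝕜} (hz : z ∈ I) : IsAiryMomentSeq z (iteratedDeriv · f z) :=
  fun k => (hasDerivAt_iteratedDeriv_and_recurrence_of_airy hI hf hf' hairy k z hz).2.2.2

end AirySolutions

section HankelDeterminants

open Matrix Topology

variable {𝕜 : Type*} [NontriviallyNormedField 𝕜] {I : Set 𝕜} {μ : ℕ → 𝕜 → 𝕜} {N : ℕ} {z : 𝕜}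

/-- The `N × N` Hankel determinant of a sequence of functions. -/
noncomputable def hankelDet (μ : ℕ → 𝕜 → 𝕜) (N : ℕ) (z : 𝕜) : 𝕜 := (hankelMatrix (μ · z) N).det

theorem isTodaAirySystem_hankel
    (hμ : ∀ k, ∀ z ∈ I, HasDerivAt (μ k) (μ (k + 1) z) z)
    (hairy : ∀ z ∈ I, IsAiryMomentSeq z (μ · z))
    (hdet : ∀ z ∈ I, hankelDet μ N z ≠ 0) :
    IsTodaAirySystem (N : 𝕜) I (fun z => normSq (μ · z) N) (fun z => normSqDeriv (μ · z) N)
      (fun z => dualLead (μ · z) N)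
      (fun z => -(dualCoeff (μ · z) N ⬝ᵥ hankelMatrix (shiftSeq (μ · z)) N *ᵥ
        dualCoeff (μ · z) N)) where
  hasDerivAt_h z hz := hasDerivAt_normSq (hμ · z hz) (hdet z hz)
  hasDerivAt_p z hz := (hasDerivAt_normSqDeriv (hμ · z hz) (hdet z hz)).congr_deriv
    ((hairy z hz).normSqSecondDeriv_eq (hdet z hz).isUnit)
  hasDerivAt_k z hz := hasDerivAt_dualLead (hμ · z hz) (hdet z hz)
  mul_eq z hz := by
    linear_combination -(hairy z hz).normSq_mul_dotProduct (hdet z hz).isUnit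

theorem hankelDet_toda_equation (hI : IsOpen I)
    (hμ : ∀ k, ∀ z ∈ I, HasDerivAt (μ k) (μ (k + 1) z) z) (hdet : ∀ z ∈ I, hankelDet μ N z ≠ 0)
    (hz : z ∈ I) :
    (deriv (deriv (hankelDet μ N)) z * hankelDet μ N z - deriv (hankelDet μ N) z ^ 2)
        / hankelDet μ N z ^ 2 = normSq (μ · z) N * dualLead (μ · z) N := by
  have hρ' : ∀ x ∈ I, HasDerivAt (hankelDet μ N)
      (hankelDet μ N x * (lastVec 𝕜 N ⬝ᵥ monicCoeff (μ · x) N)) x :=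
    fun x hx => hasDerivAt_det_hankelMatrix (hμ · x hx) (hdet x hx)
  rw [deriv_deriv_eq_of_hasDerivAt (Filter.eventually_of_mem (hI.mem_nhds hz) hρ')
    ((hρ' z hz).fun_mul (hasDerivAt_lastVec_dotProduct_monicCoeff (hμ · z hz) (hdet z hz))),
    (hρ' z hz).deriv, div_eq_iff (pow_ne_zero 2 (hdet z hz))]
  ring

theorem logDeriv_hankelDet_succ_sub (hI : IsOpen I)
    (hμ : ∀ k, ∀ z ∈ I, HasDerivAt (μ k) (μ (k + 1) z) z) (hdet : ∀ z ∈ I, hankelDet μ N z ≠ 0)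
    (hz : z ∈ I) (hnorm : normSq (μ · z) N ≠ 0) :
    logDeriv (hankelDet μ (N + 1)) z - logDeriv (hankelDet μ N) z
      = normSqDeriv (μ · z) N / normSq (μ · z) N := by
  have hnorm' := hasDerivAt_normSq (hμ · z hz) (hdet z hz)
  have hsucc : hankelDet μ (N + 1) =ᶠ[𝓝 z] fun x => hankelDet μ N x * normSq (μ · x) N := by
    filter_upwards [hI.mem_nhds hz] with x hx using det_hankelMatrix_succ (hdet x hx).isUnit
  rw [(logDeriv_congr_nhds hsucc).eq_of_nhds, logDeriv_mul z (hdet z hz) hnorm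
    (hasDerivAt_det_hankelMatrix (hμ · z hz) (hdet z hz)).differentiableAt hnorm'.differentiableAt,
    add_sub_cancel_left, logDeriv_apply, hnorm'.deriv]

end HankelDeterminants

theorem airy_determinant_solutions_general {𝕜 : Type*} [NontriviallyNormedField 𝕜] {I : Set 𝕜}
    (hI : IsOpen I) {f : 𝕜 → 𝕜} (hf : DifferentiableOn 𝕜 f I)
    (hf' : DifferentiableOn 𝕜 (deriv f) I) (hairy : ∀ z ∈ I, deriv (deriv f) z = 2 * z * f z)
    {ρ : ℕ → 𝕜 → 𝕜} (hρ : ρ = hankelDet (iteratedDeriv · f)) {N : ℕ} (hρN : ∀ z ∈ I, ρ N z ≠ 0)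
    {u W : 𝕜 → 𝕜} (hu : u = fun z => deriv (ρ (N + 1)) z / ρ (N + 1) z - deriv (ρ N) z / ρ N z)
    (hW : W = fun z => 2 * (deriv (deriv (ρ N)) z * ρ N z - deriv (ρ N) z ^ 2) / ρ N z ^ 2) :
    ∀ z ∈ I,
      (ρ (N + 1) z ≠ 0 → deriv (deriv u) z = 2 * u z ^ 3 - 4 * z * u z + (4 * N + 2)) ∧
      2 * W z * deriv (deriv W) z - deriv W z ^ 2 + 4 * W z ^ 3 - 8 * z * W z ^ 2
        + 16 * (N : 𝕜) ^ 2 = 0 := by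
  subst hρ
  have hμ (k : ℕ) : ∀ z ∈ I, HasDerivAt (iteratedDeriv k f) (iteratedDeriv (k + 1) f z) z :=
    fun z hz => hasDerivAt_iteratedDeriv_of_airy hI hf hf' hairy k hz
  have hToda := isTodaAirySystem_hankel hμ
    (fun z hz => isAiryMomentSeq_iteratedDeriv hI hf hf' hairy hz) hρN
  have hu_eq : ∀ z ∈ I, normSq (iteratedDeriv · f z) N ≠ 0 →
      u z = normSqDeriv (iteratedDeriv · f z) N / normSq (iteratedDeriv · f z) N :=
    fun z hz hnorm => (congrFun hu z).trans (logDeriv_hankelDet_succ_sub hI hμ hρN hz hnorm)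
  have hW_eq : ∀ z ∈ I, W z =
      2 * (normSq (iteratedDeriv · f z) N * dualLead (iteratedDeriv · f z) N) := fun z hz => by
    simp only [hW, mul_div_assoc, hankelDet_toda_equation hI hμ hρN hz]
  intro z hz
  refine ⟨fun hsucc => hToda.painleveII hI hu_eq hz ?_, hToda.painleveXXXIV hI hW_eq hz⟩
  rw [hankelDet, det_hankelMatrix_succ (hρN z hz).isUnit] at hsucc
  exact right_ne_zero_of_mul hsucc

/-- Airy-type determinant solutions: if `f` solves the Airy equation `f'' = 2zf` on an
open interval `I` and the Wronskians `ρ_N`, `ρ_{N+1}` are nowhere zero on `I`, then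
`u = (log (ρ_{N+1}/ρ_N))'` solves P_II[N] and `W = 2 (log ρ_N)''` solves P_XXXIV[N]
on `I`. -/
theorem airy_determinant_solutions
    (I : Set ℝ) (hIopen : IsOpen I) (hIconn : I.OrdConnected)
    (f : ℝ → ℝ)
    (hf_smooth : ContDiffOn ℝ (⊤ : ℕ∞) f I)
    (hf_airy : ∀ z ∈ I, deriv (deriv f) z = 2 * z * f z)
    (N : ℕ)
    (hρN_ne : ∀ z ∈ I, airyWronskian f N z ≠ 0)
    (hρN1_ne : ∀ z ∈ I, airyWronskian f (N + 1) z ≠ 0)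
    (u W : ℝ → ℝ)
    (hu : u = fun z => deriv (airyWronskian f (N + 1)) z / airyWronskian f (N + 1) z
      - deriv (airyWronskian f N) z / airyWronskian f N z)
    (hW : W = fun z =>
      2 * (deriv (deriv (airyWronskian f N)) z * airyWronskian f N z
        - (deriv (airyWronskian f N) z) ^ 2) / (airyWronskian f N z) ^ 2) :
    ∀ z ∈ I,
      (deriv (deriv u) z = 2 * (u z) ^ 3 - 4 * z * u z + 4 * ((N : ℝ) + 1 / 2)) ∧
      (2 * W z * deriv (deriv W) z - (deriv W z) ^ 2 + 4 * (W z) ^ 3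
        - 8 * z * (W z) ^ 2 + 16 * (N : ℝ) ^ 2 = 0) := by
  intro z hz
  obtain ⟨hII, hXXXIV⟩ := airy_determinant_solutions_general hIopen
    (hf_smooth.differentiableOn (by simp))
    ((hf_smooth.deriv_of_isOpen (m := 1) hIopen (by norm_cast)).differentiableOn one_ne_zero)
    hf_airy (ρ := airyWronskian f) rfl hρN_ne hu hW z hz
  exact ⟨(hII (hρN1_ne z hz)).trans (by ring), hXXXIV⟩
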